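/- Every sequence (σ_n)_{n∈ℕ} of permutations with |σ_n| → ∞ has a subsequence (σ_{n_j})_{j∈ℕ} that is convergent, i.e., such that for every permutation τ the sequence of densities t(τ,σ_{n_j}) converges as j → ∞. -/

import Mathlib

open Filter Topology

/-- The type of finite permutations of all orders: a permutation of order `n`
is a bijection of `Fin n` (representing `[n] = {1,…,n}`). -/
abbrev Perms : Type := Σ n : ℕ, Equiv.Perm (Fin n)

/-- A permutation `σ` of order `n` is indecomposable if there is no `m` with
`1 ≤ m < n` such that `σ` maps the first `m` elements onto the first `m` elements. -/
def Indecomposable {n : ℕ} (σ : Equiv.Perm (Fin n)) : Prop :=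
  ¬ ∃ m : ℕ, 1 ≤ m ∧ m < n ∧ ∀ i : Fin n, ((σ i : ℕ) < m ↔ (i : ℕ) < m)

/-- Indecomposability for a permutation of arbitrary order. -/
def Perms.Indec (σ : Perms) : Prop := Indecomposable σ.2

/-- `f` is an occurrence of `π` in `σ`: a strictly increasing map preserving
the relative order of values. -/
def IsOcc {k n : ℕ} (π : Equiv.Perm (Fin k)) (σ : Equiv.Perm (Fin n))
    (f : Fin k → Fin n) : Prop :=
  StrictMono f ∧ ∀ i j : Fin k, π i < π j ↔ σ (f i) < σ (f j)

/-- `Λ(π,σ)`: the number of occurrences of `π` in `σ`. -/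
noncomputable def lam {k n : ℕ} (π : Equiv.Perm (Fin k)) (σ : Equiv.Perm (Fin n)) : ℕ :=
  Nat.card {f : Fin k → Fin n // IsOcc π σ f}

/-- The (sub)permutation density `t(π,σ)`. -/
noncomputable def dens {k n : ℕ} (π : Equiv.Perm (Fin k)) (σ : Equiv.Perm (Fin n)) : ℝ :=
  if k ≤ n then (lam π σ : ℝ) / (n.choose k : ℝ) else 0

/-- The density `t(π,σ)` for permutations of arbitrary orders. -/
noncomputable def subDens (π σ : Perms) : ℝ := dens π.2 σ.2

/-- A pattern of order `k` occurs at most `n.choose k` times in a permutation of order `n`. -/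
theorem lam_le_choose {k n : ℕ} (π : Equiv.Perm (Fin k)) (σ : Equiv.Perm (Fin n)) :
    lam π σ ≤ n.choose k := by
  classical
  let image : {f : Fin k → Fin n // IsOcc π σ f} →
      {s : Finset (Fin n) // s ∈ Finset.powersetCard k Finset.univ} := fun f =>
    ⟨Finset.univ.image f.1, by
      simp [Finset.mem_powersetCard, Finset.card_image_of_injective _ f.2.1.injective]⟩
  have image_injective : Function.Injective image := by
    intro f g hfg
    have himage : Finset.univ.image f.1 = Finset.univ.image g.1 := congrArg Subtype.val hfg
    have hrange : Set.range f.1 = Set.range g.1 := by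
      simpa using congrArg (fun s : Finset (Fin n) => (s : Set (Fin n))) himage
    exact Subtype.ext ((StrictMono.range_inj f.2.1 g.2.1).1 hrange)
  simpa [lam] using Nat.card_le_card_of_injective image image_injective

/-- Subpermutation densities lie in the unit interval. -/
theorem subDens_mem_Icc (π σ : Perms) : subDens π σ ∈ Set.Icc (0 : ℝ) 1 := by
  unfold subDens dens
  split_ifs
  · exact ⟨by positivity, div_le_one_of_le₀ (by exact_mod_cast lam_le_choose π.2 σ.2)
      (by positivity)⟩
  · simp

/-- Every sequence of permutations whose orders tend to infinity has a convergent
subsequence: one along which every subpermutation density converges. -/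
theorem exists_convergent_subsequence (σs : ℕ → Perms)
    (horder : Tendsto (fun n => (σs n).1) atTop atTop) :
    ∃ φ : ℕ → ℕ, StrictMono φ ∧
      ∀ τ : Perms, ∃ L : ℝ,
        Tendsto (fun j => subDens τ (σs (φ j))) atTop (𝓝 L) := by
  have hcompact : IsCompact (Set.univ.pi fun _ : Perms => Set.Icc (0 : ℝ) 1) :=
    isCompact_univ_pi fun _ => isCompact_Icc
  obtain ⟨limit, -, φ, hφ, hlimit⟩ := hcompact.tendsto_subseq
    (x := fun n τ => subDens τ (σs n)) fun n τ _ => subDens_mem_Icc τ (σs n)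
  exact ⟨φ, hφ, fun τ => ⟨limit τ, (tendsto_pi_nhds.1 hlimit) τ⟩⟩
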